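/- arXiv:2509.14538 — 2 statements merged into one kernel-verified Lean document; each statement's English description precedes it below -/
import Mathlib

section
/- Fix g = 4π ∑_{j=1}^{k₁} m_j δ_{p_j} and h = 4π ∑_{j=1}^{k₂} n_j δ_{q_j} with m_j, n_j ∈ ℕ. There exist constants N(g,h) and λ(g,h) such that whenever n ≥ N(g,h) or λ ≥ λ(g,h), the topological solution of the system Δu = λ e^v (e^u − 1) + g, Δv = λ e^u (e^v − 1) + h on ℤⁿ is unique: any two topological solutions (u₁, v₁) and (u₂, v₂) satisfy u₁ = u₂ and v₁ = v₂. -/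
/-!
By the maximum principle a topological solution satisfies `u, v ≤ 0`. Two solutions with values in
`[-1/4, 0]` agree: there the nonlinearity is diagonally dominant, so the maximum principle applies
at a point where the larger of `|u₁ - u₂|` and `|v₁ - v₂|` is maximal. It remains to confine every
solution to `[-1/4, 0]`, which only takes a bound `M` on the total masses of `g, h ≥ 0`.

* Large dimension: for `n ≥ 8` the function `1 / (1 + |x|²)` is superharmonic with Laplacian `-n` at
  the origin. Its convolution with `g` is at most `M`, and `-u` lies below `1 / n` times it.
* Large coupling: summing the first equation over `{u < -δ}` bounds `λ eᵛ (1 - eᵘ)` by `M`, and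
  likewise `λ eᵘ (1 - eᵛ)`. Hence wherever `u < -1/4`, in fact `eᵘ ≤ 6M / λ`. Were there such
  points, one of them would have a neighbour where `u ≥ -1/4`, and `Δu` at that neighbour would be
  far below `-M`, contradicting `Δu ≥ g - M`.
-/

open Filter Real

noncomputable section

namespace CS

abbrev Lat (n : ℕ) := Fin n → ℤ

/-- d(x) = ∑ᵢ |xᵢ|, the graph distance to the origin on ℤⁿ. -/
def latDist {n : ℕ} (x : Lat n) : ℕ := ∑ i, (x i).natAbs

/-- x ~ y iff ∑ᵢ |xᵢ − yᵢ| = 1. -/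
def adjacent {n : ℕ} (x y : Lat n) : Prop := (∑ i, (x i - y i).natAbs) = 1

instance {n : ℕ} (x y : Lat n) : Decidable (adjacent x y) :=
  decidable_of_iff ((∑ i, (x i - y i).natAbs) = 1) Iff.rfl

def unitVec {n : ℕ} (i : Fin n) : Lat n := fun j => if j = i then 1 else 0

/-- The graph Laplacian Δu(x) = ∑_{y ~ x} (u(y) − u(x)) on ℤⁿ. -/
def lapl {n : ℕ} (u : Lat n → ℝ) (x : Lat n) : ℝ :=
  ∑ i, (u (x + unitVec i) + u (x - unitVec i) - 2 * u x)

/-- The filter of neighborhoods of infinity (d(x) → +∞) on ℤⁿ. -/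
def atInfty (n : ℕ) : Filter (Lat n) := Filter.comap latDist Filter.atTop

/-- The Dirac mass at p. -/
def dirac {n : ℕ} (p x : Lat n) : ℝ := if x = p then 1 else 0

/-- (u,v) is a topological solution of Δu = λ eᵛ(eᵘ−1) + g, Δv = λ eᵘ(eᵛ−1) + h
with u, v → 0 at infinity. -/
def IsTopSol {n : ℕ} (lam : ℝ) (g h u v : Lat n → ℝ) : Prop :=
  (∀ x, lapl u x = lam * Real.exp (v x) * (Real.exp (u x) - 1) + g x) ∧
  (∀ x, lapl v x = lam * Real.exp (u x) * (Real.exp (v x) - 1) + h x) ∧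
  Filter.Tendsto u (atInfty n) (nhds 0) ∧
  Filter.Tendsto v (atInfty n) (nhds 0)

/-! ### The Laplacian and the comparison principle -/

section Laplacian

variable {n : ℕ}

lemma tendsto_latDist_cofinite : Tendsto (latDist (n := n)) cofinite atTop := by
  have norm_le (x : Lat n) : ‖x‖ ≤ (latDist x : ℝ) := by
    refine (pi_norm_le_iff_of_nonneg (Nat.cast_nonneg _)).2 fun i => ?_
    rw [← Int.norm_cast_real, Real.norm_eq_abs, ← Int.cast_abs, ← Nat.cast_natAbs]
    exact_mod_cast Finset.single_le_sum (f := fun i => (x i).natAbs)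
      (fun _ _ => Nat.zero_le _) (Finset.mem_univ i)
  rw [← tendsto_natCast_atTop_iff (R := ℝ), ← cocompact_eq_cofinite]
  exact tendsto_atTop_mono norm_le (tendsto_norm_cocompact_atTop (E := Lat n))

lemma cofinite_le_atInfty : cofinite ≤ atInfty n :=
  tendsto_iff_comap.1 tendsto_latDist_cofinite

@[simp]
lemma lapl_zero (x : Lat n) : lapl 0 x = 0 := by
  simp [lapl]

lemma lapl_const_mul (c : ℝ) (f : Lat n → ℝ) (x : Lat n) :
    lapl (fun y => c * f y) x = c * lapl f x := by
  simp only [lapl, Finset.mul_sum]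
  exact Finset.sum_congr rfl fun i _ => by ring

lemma lapl_le_lapl_of_isMin_sub {f u : Lat n → ℝ} {x : Lat n}
    (hx : ∀ y, u x - f x ≤ u y - f y) : lapl f x ≤ lapl u x :=
  Finset.sum_le_sum fun i _ => by linarith [hx (x + unitVec i), hx (x - unitVec i)]

lemma le_of_lapl_lt {f u : Lat n → ℝ} (hinf : ∀ ε > 0, ∀ᶠ x in cofinite, f x - ε ≤ u x)
    (hlapl : ∀ x, u x < f x → lapl u x < lapl f x) (x : Lat n) : f x ≤ u x := by
  by_contra! hx
  have far : ∀ᶠ y in cocompact (Lat n), u x - f x ≤ u y - f y := by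
    rw [cocompact_eq_cofinite]
    filter_upwards [hinf (f x - u x) (sub_pos.2 hx)] with y hy
    linarith
  obtain ⟨y, hy⟩ :=
    (continuous_of_discreteTopology (f := fun y => u y - f y)).exists_forall_le' x far
  exact (lapl_le_lapl_of_isMin_sub hy).not_gt (hlapl y (by linarith [hy x]))

lemma hasSum_lapl {W : Lat n → ℝ} (hW : Summable W) : HasSum (lapl W) 0 := by
  have hasSum_direction (i : Fin n) :
      HasSum (fun x => W (x + unitVec i) + W (x - unitVec i) - 2 * W x) 0 := by
    obtain ⟨s, hs⟩ := hW
    have forward : HasSum (fun x => W (x + unitVec i)) s :=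
      (Equiv.addRight (unitVec i)).hasSum_iff.2 hs
    have backward : HasSum (fun x => W (x - unitVec i)) s :=
      (Equiv.subRight (unitVec i)).hasSum_iff.2 hs
    simpa [two_mul] using (forward.add backward).sub (hs.mul_left 2)
  rw [← Finset.sum_const_zero (s := (Finset.univ : Finset (Fin n)))]
  exact hasSum_sum fun i _ => hasSum_direction i

lemma hasSum_mul_lapl_sub {g K W : Lat n → ℝ}
    (h : ∀ x, HasSum (fun y => g y * K (x - y)) (W x)) (x : Lat n) :
    HasSum (fun y => g y * lapl K (x - y)) (lapl W x) := by
  simp only [lapl, Finset.mul_sum]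
  refine hasSum_sum fun i _ => ?_
  have summed := ((h (x + unitVec i)).add (h (x - unitVec i))).sub ((h x).mul_left 2)
  refine summed.congr_fun fun y => ?_
  rw [add_sub_right_comm x, sub_right_comm x]
  ring

lemma exists_mem_add_unitVec_notMem {s : Set (Lat n)} (hs : s.Finite) (hne : s.Nonempty)
    (i : Fin n) : ∃ y ∈ s, y + unitVec i ∉ s := by
  obtain ⟨y, hy, hmax⟩ := s.exists_max_image (fun y => y i) hs hne
  refine ⟨y, hy, fun hmem => ?_⟩
  have := hmax _ hmem
  simp [unitVec] at this

lemma lapl_le_of_nonpos {u : Lat n → ℝ} (hu : ∀ x, u x ≤ 0) (x : Lat n) (i : Fin n) :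
    lapl u x ≤ u (x - unitVec i) - 2 * n * u x := by
  calc lapl u x ≤ ∑ j, ((if j = i then u (x - unitVec i) else 0) - 2 * u x) := by
        refine Finset.sum_le_sum fun j _ => ?_
        split_ifs with hj
        · rw [hj]
          linarith [hu (x + unitVec i)]
        · linarith [hu (x + unitVec j), hu (x - unitVec j)]
    _ = u (x - unitVec i) - 2 * n * u x := by
        rw [Finset.sum_sub_distrib, Finset.sum_ite_eq' Finset.univ i, if_pos (Finset.mem_univ i)]
        simp
        ring

lemma neg_le_of_gap {u : Lat n → ℝ} {δ C : ℝ} (i : Fin n) (hδ : 0 < δ)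
    (hlim : Tendsto u cofinite (nhds 0)) (hu : ∀ x, u x ≤ 0) (hlapl : ∀ x, -C ≤ lapl u x)
    (hgap : ∀ x, u x < -δ → u x < -(C + 2 * n * δ)) (x : Lat n) : -δ ≤ u x := by
  by_contra! hx
  have finite_low : {y | u y < -δ}.Finite := by
    simpa [eventually_cofinite] using hlim.eventually_const_le (neg_neg_of_pos hδ)
  obtain ⟨y, hy, hz⟩ := exists_mem_add_unitVec_notMem finite_low ⟨x, hx⟩ i
  have upper := lapl_le_of_nonpos hu (y + unitVec i) i
  rw [add_sub_cancel_right] at upper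
  have high : n * -δ ≤ n * u (y + unitVec i) :=
    mul_le_mul_of_nonneg_left (not_lt.1 hz) (Nat.cast_nonneg n)
  linarith [hlapl (y + unitVec i), hgap y hy]

end Laplacian

/-! ### The barrier in large dimension -/

section Barrier

variable {n : ℕ}

/-- The squared Euclidean norm of a lattice point. -/
def sqNorm (x : Lat n) : ℝ := ∑ j, (x j : ℝ) ^ 2

lemma sqNorm_nonneg (x : Lat n) : 0 ≤ sqNorm x :=
  Finset.sum_nonneg fun _ _ => sq_nonneg _

lemma sq_le_sqNorm (x : Lat n) (i : Fin n) : (x i : ℝ) ^ 2 ≤ sqNorm x :=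
  Finset.single_le_sum (f := fun j => (x j : ℝ) ^ 2) (fun _ _ => sq_nonneg _) (Finset.mem_univ i)

lemma sqNorm_add_unitVec (x : Lat n) (i : Fin n) :
    sqNorm (x + unitVec i) = sqNorm x + 2 * x i + 1 := by
  have coordinate (j : Fin n) : (((x + unitVec i) j : ℤ) : ℝ) ^ 2
      = (x j : ℝ) ^ 2 + if j = i then 2 * (x j : ℝ) + 1 else 0 := by
    by_cases hj : j = i <;> simp [unitVec, hj]
    ring
  simp only [sqNorm, coordinate, Finset.sum_add_distrib]
  simp [add_assoc]

lemma sqNorm_sub_unitVec (x : Lat n) (i : Fin n) :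
    sqNorm (x - unitVec i) = sqNorm x - 2 * x i + 1 := by
  have h := sqNorm_add_unitVec (x - unitVec i) i
  have coordinate : (((x - unitVec i) i : ℤ) : ℝ) = x i - 1 := by simp [unitVec]
  rw [sub_add_cancel, coordinate] at h
  linarith

/-- The function `1 / (1 + |x|²)`, superharmonic on `ℤⁿ` for `n ≥ 8`; it stands in for a multiple of
the Green function of the Laplacian. -/
def barrier (x : Lat n) : ℝ := (1 + sqNorm x)⁻¹

lemma barrier_nonneg (x : Lat n) : 0 ≤ barrier x :=
  inv_nonneg.2 (by linarith [sqNorm_nonneg x])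

lemma barrier_le_one (x : Lat n) : barrier x ≤ 1 :=
  inv_le_one_of_one_le₀ (by linarith [sqNorm_nonneg x])

/-- The right side is affine in `a²`, so that its sum over the coordinate directions depends on `x`
only through `|x|²`. -/
lemma second_difference_inv_le {t a : ℝ} (ht : 1 ≤ t) (ha : a ^ 2 ≤ t - 1) :
    (t + 1 + 2 * a)⁻¹ + (t + 1 - 2 * a)⁻¹ - 2 * t⁻¹
      ≤ 2 / (t * (t + 1) ^ 2) * (8 * a ^ 2 - (t + 1)) := by
  have half_le : (t + 1) ^ 2 ≤ 2 * ((t + 1) ^ 2 - 4 * a ^ 2) := by nlinarith [sq_nonneg (t - 3)]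
  have denom_pos : 0 < (t + 1) ^ 2 - 4 * a ^ 2 := by nlinarith
  have plus_pos : 0 < t + 1 + 2 * a := by nlinarith [sq_nonneg (a + 1)]
  have minus_pos : 0 < t + 1 - 2 * a := by nlinarith [sq_nonneg (a - 1)]
  calc (t + 1 + 2 * a)⁻¹ + (t + 1 - 2 * a)⁻¹ - 2 * t⁻¹
      = 2 / t * ((4 * a ^ 2 - (t + 1)) / ((t + 1) ^ 2 - 4 * a ^ 2)) := by
        rw [show (t + 1) ^ 2 - 4 * a ^ 2 = (t + 1 + 2 * a) * (t + 1 - 2 * a) by ring]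
        field_simp
        ring
    _ ≤ 2 / t * ((8 * a ^ 2 - (t + 1)) / (t + 1) ^ 2) := by
        refine mul_le_mul_of_nonneg_left ?_ (by positivity)
        rw [div_le_div_iff₀ denom_pos (by positivity)]
        nlinarith [mul_nonneg (sq_nonneg a) (sub_nonneg.2 half_le),
          mul_nonneg (sq_nonneg a) (by linarith : 0 ≤ t + 1)]
    _ = 2 / (t * (t + 1) ^ 2) * (8 * a ^ 2 - (t + 1)) := by field_simp

lemma lapl_barrier_le_sqNorm (x : Lat n) :
    lapl barrier x ≤ 2 / ((1 + sqNorm x) * (sqNorm x + 2) ^ 2)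
      * (8 * sqNorm x - n * (sqNorm x + 2)) := by
  calc lapl barrier x
      ≤ ∑ i, 2 / ((1 + sqNorm x) * (sqNorm x + 2) ^ 2)
          * (8 * (x i : ℝ) ^ 2 - (sqNorm x + 2)) := by
        refine Finset.sum_le_sum fun i _ => ?_
        have h := second_difference_inv_le (t := 1 + sqNorm x) (a := x i)
          (by linarith [sqNorm_nonneg x]) (by linarith [sq_le_sqNorm x i])
        simp only [barrier, sqNorm_add_unitVec, sqNorm_sub_unitVec]
        ring_nf at h ⊢
        exact h
    _ = 2 / ((1 + sqNorm x) * (sqNorm x + 2) ^ 2) * (8 * sqNorm x - n * (sqNorm x + 2)) := by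
        rw [← Finset.mul_sum, Finset.sum_sub_distrib, ← Finset.mul_sum, ← sqNorm,
          Finset.sum_const, Finset.card_univ, Fintype.card_fin, nsmul_eq_mul]

lemma lapl_barrier_le (hn : 8 ≤ n) (x : Lat n) : lapl barrier x ≤ -(n * dirac 0 x) := by
  refine (lapl_barrier_le_sqNorm x).trans ?_
  by_cases hx : x = 0
  · apply le_of_eq
    simp [hx, sqNorm, dirac]
    ring
  · have hn' : (8 : ℝ) ≤ n := by exact_mod_cast hn
    have hs := sqNorm_nonneg x
    rw [dirac, if_neg hx, mul_zero, neg_zero]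
    exact mul_nonpos_of_nonneg_of_nonpos (by positivity) (by nlinarith)

/-- The convolution of a source `g` with the barrier. -/
def potential (g : Lat n → ℝ) (x : Lat n) : ℝ := ∑' y, g y * barrier (x - y)

variable {g : Lat n → ℝ}

lemma mul_barrier_le (hg : ∀ x, 0 ≤ g x) (x y : Lat n) : g y * barrier (x - y) ≤ g y :=
  mul_le_of_le_one_right (hg y) (barrier_le_one _)

lemma hasSum_potential (hg : ∀ x, 0 ≤ g x) (hs : Summable g) (x : Lat n) :
    HasSum (fun y => g y * barrier (x - y)) (potential g x) :=
  (hs.of_nonneg_of_le (fun y => mul_nonneg (hg y) (barrier_nonneg _)) (mul_barrier_le hg x)).hasSum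

lemma potential_nonneg (hg : ∀ x, 0 ≤ g x) (x : Lat n) : 0 ≤ potential g x :=
  tsum_nonneg fun y => mul_nonneg (hg y) (barrier_nonneg _)

lemma potential_le_tsum (hg : ∀ x, 0 ≤ g x) (hs : Summable g) (x : Lat n) :
    potential g x ≤ ∑' y, g y :=
  hasSum_le (mul_barrier_le hg x) (hasSum_potential hg hs x) hs.hasSum

lemma lapl_potential_le (hn : 8 ≤ n) (hg : ∀ x, 0 ≤ g x) (hs : Summable g) (x : Lat n) :
    lapl (potential g) x ≤ -(n * g x) := by
  have termwise (y : Lat n) :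
      g y * lapl barrier (x - y) ≤ if y = x then -(n * g x) else 0 := by
    refine (mul_le_mul_of_nonneg_left (lapl_barrier_le hn _) (hg y)).trans_eq ?_
    by_cases hy : y = x
    · simp [hy, dirac, mul_comm]
    · simp [hy, dirac, sub_eq_zero, Ne.symm hy]
  exact hasSum_le termwise (hasSum_mul_lapl_sub (hasSum_potential hg hs) x) (hasSum_ite_eq x _)

end Barrier

/-! ### The scalar equation `Δu = w (eᵘ - 1) + g` -/

section Scalar

variable {n : ℕ} {u g : Lat n → ℝ}

/-- The equation is summed against the indicator of `{u < -δ}`: the truncation `min (u + δ) 0` has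
finite support, so its Laplacian sums to zero. -/
lemma absorption_le_tsum {F : Lat n → ℝ} (hu : Tendsto u cofinite (nhds 0))
    (hF : ∀ x, 0 ≤ F x) (hg : ∀ x, 0 ≤ g x) (hs : Summable g)
    (heq : ∀ x, lapl u x = g x - F x) {x : Lat n} (hx : u x < 0) : F x ≤ ∑' y, g y := by
  obtain ⟨δ, hδ, hxδ⟩ : ∃ δ > 0, u x < -δ := ⟨-u x / 2, by linarith, by linarith⟩
  set W : Lat n → ℝ := fun y => min (u y + δ) 0
  have summable_W : Summable W := by
    refine summable_of_hasFiniteSupport (Set.Finite.subset (s := {y | u y < -δ}) ?_ fun y hy => ?_)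
    · simpa [eventually_cofinite] using hu.eventually_const_le (neg_neg_of_pos hδ)
    · by_contra hlow
      exact hy (min_eq_right (by linarith [show -δ ≤ u y from not_lt.1 hlow]))
  have lapl_W_le (y : Lat n) : lapl W y ≤ g y - if y = x then F x else 0 := by
    by_cases hy : u y < -δ
    · have touch : W y = u y + δ := min_eq_left (by linarith)
      have bound : lapl W y ≤ lapl u y := lapl_le_lapl_of_isMin_sub fun z => by
        linarith [min_le_left (u z + δ) 0]
      rw [heq] at bound
      split_ifs with hyx
      · rwa [hyx] at bound ⊢
      · linarith [hF y]
    · have touch : W y = 0 := min_eq_right (by linarith)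
      have bound : lapl W y ≤ lapl 0 y := lapl_le_lapl_of_isMin_sub fun z => by
        simp only [touch, Pi.zero_apply, sub_zero]
        linarith [min_le_right (u z + δ) 0]
      have hyx : y ≠ x := fun h => hy (h ▸ hxδ)
      simpa [hyx] using bound.trans (by simpa using hg y)
  have := hasSum_le lapl_W_le (hasSum_lapl summable_W) (hs.hasSum.sub (hasSum_ite_eq x (F x)))
  linarith

variable {w : Lat n → ℝ}

lemma nonpos_of_lapl_eq (hw : ∀ x, 0 < w x) (hg : ∀ x, 0 ≤ g x)
    (hu : Tendsto u cofinite (nhds 0)) (heq : ∀ x, lapl u x = w x * (exp (u x) - 1) + g x)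
    (x : Lat n) : u x ≤ 0 := by
  refine le_of_lapl_lt (f := u) (u := 0) (fun ε hε => ?_) (fun y hy => ?_) x
  · filter_upwards [hu.eventually_le_const hε] with y hy
    simpa using hy
  · have := mul_pos (hw y) (sub_pos.2 (one_lt_exp_iff.2 hy))
    rw [lapl_zero, heq]
    linarith [hg y]

lemma weight_mul_one_sub_exp_le_tsum (hw : ∀ x, 0 < w x) (hg : ∀ x, 0 ≤ g x) (hs : Summable g)
    (hu : Tendsto u cofinite (nhds 0)) (heq : ∀ x, lapl u x = w x * (exp (u x) - 1) + g x)
    (x : Lat n) : w x * (1 - exp (u x)) ≤ ∑' y, g y := by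
  have nonpos := nonpos_of_lapl_eq hw hg hu heq
  rcases (nonpos x).lt_or_eq with hx | hx
  · refine absorption_le_tsum (F := fun y => w y * (1 - exp (u y))) hu (fun y => ?_) hg hs
      (fun y => ?_) hx
    · exact mul_nonneg (hw y).le (sub_nonneg.2 (exp_le_one_iff.2 (nonpos y)))
    · rw [heq]
      ring
  · simpa [hx] using tsum_nonneg hg

lemma neg_tsum_div_le (hn : 8 ≤ n) (hw : ∀ x, 0 < w x) (hg : ∀ x, 0 ≤ g x) (hs : Summable g)
    (hu : Tendsto u cofinite (nhds 0)) (heq : ∀ x, lapl u x = w x * (exp (u x) - 1) + g x)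
    (x : Lat n) : -((∑' y, g y) / n) ≤ u x := by
  have hn0 : (n : ℝ) ≠ 0 := Nat.cast_ne_zero.2 (by omega)
  set f : Lat n → ℝ := fun y => -(n : ℝ)⁻¹ * potential g y
  have nonpos_f (y : Lat n) : f y ≤ 0 :=
    mul_nonpos_of_nonpos_of_nonneg (by simp) (potential_nonneg hg y)
  have le_lapl_f (y : Lat n) : g y ≤ lapl f y :=
    calc g y = -(n : ℝ)⁻¹ * -(n * g y) := by rw [neg_mul_neg, inv_mul_cancel_left₀ hn0]
      _ ≤ -(n : ℝ)⁻¹ * lapl (potential g) y :=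
          mul_le_mul_of_nonpos_left (lapl_potential_le hn hg hs y) (by simp)
      _ = lapl f y := (lapl_const_mul _ _ y).symm
  have f_le_u : f x ≤ u x := by
    refine le_of_lapl_lt (fun ε hε => ?_) (fun y hy => ?_) x
    · filter_upwards [hu.eventually_const_le (neg_neg_of_pos hε)] with y hy
      linarith [nonpos_f y]
    · have := mul_neg_of_pos_of_neg (hw y)
        (sub_neg.2 (exp_lt_one_iff.2 (hy.trans_le (nonpos_f y))))
      rw [heq]
      linarith [le_lapl_f y]
  calc -((∑' y, g y) / n) = -(n : ℝ)⁻¹ * ∑' y, g y := by ring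
    _ ≤ f x := mul_le_mul_of_nonpos_left (potential_le_tsum hg hs x) (by simp)
    _ ≤ u x := f_le_u

end Scalar

/-! ### The nonlinearity -/

section Nonlinearity

lemma exp_mul_sub_le_exp_sub_exp (a b : ℝ) : exp b * (a - b) ≤ exp a - exp b := by
  have split : exp a = exp b * exp (a - b) := by rw [← exp_add, add_sub_cancel]
  rw [split]
  nlinarith [exp_pos b, add_one_le_exp (a - b)]

lemma exp_mul_exp_sub_one_lt {u₁ u₂ v₁ v₂ : ℝ} (hu₂ : u₂ ∈ Set.Icc (-(1 / 4)) 0)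
    (hv₁ : v₁ ∈ Set.Icc (-(1 / 4)) 0) (hlt : u₂ < u₁) (hle : |v₁ - v₂| ≤ u₁ - u₂) :
    exp v₂ * (exp u₂ - 1) < exp v₁ * (exp u₁ - 1) := by
  have exp_u₂_ge : 3 / 4 ≤ exp u₂ := by linarith [add_one_le_exp u₂, hu₂.1]
  have exp_v₁_ge : 3 / 4 ≤ exp v₁ := by linarith [add_one_le_exp v₁, hv₁.1]
  have exp_u₂_le : exp u₂ ≤ 1 := exp_le_one_iff.2 hu₂.2
  have exp_v₁_le : exp v₁ ≤ 1 := exp_le_one_iff.2 hv₁.2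
  have gain : 3 / 4 * (u₁ - u₂) ≤ exp u₁ - exp u₂ :=
    (mul_le_mul_of_nonneg_right exp_u₂_ge (by linarith)).trans (exp_mul_sub_le_exp_sub_exp u₁ u₂)
  have loss : exp v₁ - exp v₂ ≤ u₁ - u₂ := by
    have := exp_mul_sub_le_exp_sub_exp v₂ v₁
    nlinarith [exp_pos v₁, le_abs_self (v₁ - v₂)]
  have diagonal : 3 / 4 * (3 / 4 * (u₁ - u₂)) ≤ exp v₁ * (exp u₁ - exp u₂) :=
    mul_le_mul exp_v₁_ge gain (by linarith) (exp_pos _).le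
  have off_diagonal : (exp v₁ - exp v₂) * (1 - exp u₂) ≤ (u₁ - u₂) * (1 / 4) :=
    mul_le_mul loss (by linarith) (by linarith) (by linarith)
  linarith

/-- The two bounds control `λ eᵇ` and `λ (eᵃ - eᵇ)`, hence `λ eᵃ`. -/
lemma lt_neg_of_lt_neg_quarter {lam C K a b : ℝ} (hlam : 0 < lam)
    (ha : lam * exp b * (1 - exp a) ≤ C) (hb : lam * exp a * (1 - exp b) ≤ C)
    (hlarge : 6 * C * exp K < lam) (hlt : a < -(1 / 4)) : a < -K := by
  have exp_a_le : exp a ≤ 4 / 5 := by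
    have inv_le : exp (-a) ≥ 5 / 4 := by linarith [add_one_le_exp (-a)]
    have cancel : exp a * exp (-a) = 1 := by rw [← exp_add, add_neg_cancel, exp_zero]
    nlinarith [exp_pos a]
  have exp_b_le : lam * exp b ≤ 5 * C := by
    nlinarith [mul_pos hlam (exp_pos b)]
  have lam_mul_exp_a_le : lam * exp a ≤ 6 * C := by
    nlinarith [mul_pos hlam (exp_pos b)]
  have : lam * exp (a + K) < lam * 1 := by
    calc lam * exp (a + K) = lam * exp a * exp K := by rw [exp_add, mul_assoc]
      _ ≤ 6 * C * exp K := mul_le_mul_of_nonneg_right lam_mul_exp_a_le (exp_pos K).le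
      _ < lam * 1 := by rwa [mul_one]
  linarith [exp_lt_one_iff.1 (lt_of_mul_lt_mul_left this hlam.le)]

end Nonlinearity

/-! ### Topological solutions -/

/-- A nonnegative source on `ℤⁿ` of total mass at most `M`. -/
structure IsSource {n : ℕ} (M : ℝ) (g : Lat n → ℝ) : Prop where
  nonneg : ∀ x, 0 ≤ g x
  summable : Summable g
  tsum_le : ∑' x, g x ≤ M

namespace IsSource

variable {n : ℕ} {M M' : ℝ} {g : Lat n → ℝ}

lemma mono (hg : IsSource M g) (hM : M ≤ M') : IsSource M' g :=
  ⟨hg.nonneg, hg.summable, hg.tsum_le.trans hM⟩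

lemma mass_nonneg (hg : IsSource M g) : 0 ≤ M :=
  (tsum_nonneg hg.nonneg).trans hg.tsum_le

end IsSource

lemma dirac_nonneg {n : ℕ} (p x : Lat n) : 0 ≤ dirac p x := by
  unfold dirac
  split_ifs <;> norm_num

lemma isSource_sum_dirac {n k : ℕ} (m : Fin k → ℕ) (p : Fin k → Lat n) :
    IsSource (4 * π * ∑ j, (m j : ℝ)) (fun x => 4 * π * ∑ j, (m j : ℝ) * dirac (p j) x) := by
  have mass : HasSum (fun x => 4 * π * ∑ j, (m j : ℝ) * dirac (p j) x)
      (4 * π * ∑ j, (m j : ℝ)) := by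
    refine (hasSum_sum fun j _ => ?_).mul_left _
    simpa [dirac] using (hasSum_ite_eq (p j) (1 : ℝ)).mul_left (m j : ℝ)
  refine ⟨fun x => ?_, mass.summable, mass.tsum_eq.le⟩
  exact mul_nonneg (by positivity)
    (Finset.sum_nonneg fun j _ => mul_nonneg (Nat.cast_nonneg _) (dirac_nonneg _ _))

namespace IsTopSol

variable {n : ℕ} {lam M : ℝ} {g h u v u₁ v₁ u₂ v₂ : Lat n → ℝ}

lemma swap (hsol : IsTopSol lam g h u v) : IsTopSol lam h g v u :=
  ⟨hsol.2.1, hsol.1, hsol.2.2.2, hsol.2.2.1⟩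

lemma tendsto_cofinite (hsol : IsTopSol lam g h u v) : Tendsto u cofinite (nhds 0) :=
  hsol.2.2.1.mono_left cofinite_le_atInfty

lemma nonpos (hsol : IsTopSol lam g h u v) (hlam : 0 < lam) (hg : ∀ x, 0 ≤ g x) (x : Lat n) :
    u x ≤ 0 :=
  nonpos_of_lapl_eq (fun _ => mul_pos hlam (exp_pos _)) hg hsol.tendsto_cofinite hsol.1 x

lemma coupling_le (hsol : IsTopSol lam g h u v) (hlam : 0 < lam) (hg : IsSource M g)
    (x : Lat n) : lam * exp (v x) * (1 - exp (u x)) ≤ M :=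
  (weight_mul_one_sub_exp_le_tsum (fun _ => mul_pos hlam (exp_pos _)) hg.nonneg hg.summable
    hsol.tendsto_cofinite hsol.1 x).trans hg.tsum_le

lemma neg_quarter_le_of_large_dim (hsol : IsTopSol lam g h u v) (hlam : 0 < lam)
    (hg : IsSource M g) (hn : 8 ≤ n) (hM : 4 * M ≤ n) (x : Lat n) : -(1 / 4) ≤ u x := by
  have hn0 : (0 : ℝ) < n := by exact_mod_cast (by omega : 0 < n)
  have mass_div_le : (∑' y, g y) / n ≤ 1 / 4 := by
    rw [div_le_iff₀ hn0]
    linarith [hg.tsum_le]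
  linarith [neg_tsum_div_le hn (fun _ => mul_pos hlam (exp_pos _)) hg.nonneg hg.summable
    hsol.tendsto_cofinite hsol.1 x]

lemma neg_quarter_le_of_large_coupling (hsol : IsTopSol lam g h u v) (hlam : 0 < lam)
    (hg : IsSource M g) (hh : IsSource M h) (hn : 0 < n)
    (hlarge : 6 * M * exp (M + n) < lam) (x : Lat n) : -(1 / 4) ≤ u x := by
  refine neg_le_of_gap (C := M) ⟨0, hn⟩ (by norm_num) hsol.tendsto_cofinite
    (hsol.nonpos hlam hg.nonneg) (fun y => ?_) (fun y hy => ?_) x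
  · rw [hsol.1]
    linarith [hsol.coupling_le hlam hg y, hg.nonneg y]
  · have := lt_neg_of_lt_neg_quarter hlam (hsol.coupling_le hlam hg y)
      (hsol.swap.coupling_le hlam hh y) hlarge hy
    linarith [Nat.cast_nonneg (α := ℝ) n]

lemma mem_Icc_of_large {N : ℕ} (hsol : IsTopSol lam g h u v) (hlam : 0 < lam)
    (hg : IsSource M g) (hh : IsSource M h) (hn : 0 < n) (hN : 8 ≤ N) (hMN : 4 * M ≤ N)
    (hlarge : N ≤ n ∨ 6 * M * exp (M + N) < lam) (x : Lat n) :
    u x ∈ Set.Icc (-(1 / 4)) 0 := by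
  refine ⟨?_, hsol.nonpos hlam hg.nonneg x⟩
  rcases le_or_gt N n with hNn | hnN
  · exact hsol.neg_quarter_le_of_large_dim hlam hg (hN.trans hNn)
      (hMN.trans (Nat.cast_le.2 hNn)) x
  · refine hsol.neg_quarter_le_of_large_coupling hlam hg hh hn
      (lt_of_le_of_lt ?_ (hlarge.resolve_left hnN.not_ge)) x
    have := hg.mass_nonneg
    gcongr

lemma eq_at_max_abs_sub (h₁ : IsTopSol lam g h u₁ v₁) (h₂ : IsTopSol lam g h u₂ v₂)
    (hlam : 0 < lam) {x : Lat n}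
    (hu₁ : u₁ x ∈ Set.Icc (-(1 / 4)) 0) (hv₁ : v₁ x ∈ Set.Icc (-(1 / 4)) 0)
    (hu₂ : u₂ x ∈ Set.Icc (-(1 / 4)) 0) (hv₂ : v₂ x ∈ Set.Icc (-(1 / 4)) 0)
    (hle : |v₁ x - v₂ x| ≤ |u₁ x - u₂ x|)
    (hmax : ∀ y, |u₁ y - u₂ y| ≤ |u₁ x - u₂ x|) : u₁ x = u₂ x := by
  wlog hlt : u₂ x < u₁ x generalizing u₁ u₂ v₁ v₂
  · rcases (not_lt.1 hlt).eq_or_lt with heq | hgt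
    · exact heq
    · refine (this h₂ h₁ hu₂ hv₂ hu₁ hv₁ ?_ (fun y => ?_) hgt).symm
      · rwa [abs_sub_comm, abs_sub_comm (u₂ x)]
      · rw [abs_sub_comm, abs_sub_comm (u₂ x)]
        exact hmax y
  rw [abs_of_pos (sub_pos.2 hlt)] at hle hmax
  have lapl_le : lapl u₁ x ≤ lapl u₂ x := lapl_le_lapl_of_isMin_sub fun y => by
    linarith [hmax y, le_abs_self (u₁ y - u₂ y)]
  rw [h₁.1, h₂.1, add_le_add_iff_right, mul_assoc, mul_assoc] at lapl_le
  exact absurd (le_of_mul_le_mul_left lapl_le hlam)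
    (exp_mul_exp_sub_one_lt hu₂ hv₁ hlt hle).not_ge

lemma exists_max_abs_sub (h₁ : IsTopSol lam g h u₁ v₁) (h₂ : IsTopSol lam g h u₂ v₂) :
    ∃ x, ∀ y, max |u₁ y - u₂ y| |v₁ y - v₂ y| ≤ max |u₁ x - u₂ x| |v₁ x - v₂ x| := by
  have tendsto_zero :
      Tendsto (fun y => max |u₁ y - u₂ y| |v₁ y - v₂ y|) (cocompact (Lat n)) (nhds 0) := by
    rw [cocompact_eq_cofinite]
    simpa using (h₁.tendsto_cofinite.sub h₂.tendsto_cofinite).abs.max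
      (h₁.swap.tendsto_cofinite.sub h₂.swap.tendsto_cofinite).abs
  by_cases hpos : ∃ x₀, 0 < max |u₁ x₀ - u₂ x₀| |v₁ x₀ - v₂ x₀|
  · obtain ⟨x₀, hx₀⟩ := hpos
    exact continuous_of_discreteTopology.exists_forall_ge' x₀ (tendsto_zero.eventually_le_const hx₀)
  · push Not at hpos
    exact ⟨0, fun y => (hpos y).trans (le_max_of_le_left (abs_nonneg _))⟩

theorem eq_of_mem_Icc (h₁ : IsTopSol lam g h u₁ v₁) (h₂ : IsTopSol lam g h u₂ v₂)
    (hlam : 0 < lam)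
    (hu₁ : ∀ x, u₁ x ∈ Set.Icc (-(1 / 4)) 0) (hv₁ : ∀ x, v₁ x ∈ Set.Icc (-(1 / 4)) 0)
    (hu₂ : ∀ x, u₂ x ∈ Set.Icc (-(1 / 4)) 0) (hv₂ : ∀ x, v₂ x ∈ Set.Icc (-(1 / 4)) 0) :
    u₁ = u₂ ∧ v₁ = v₂ := by
  obtain ⟨x, hx⟩ := exists_max_abs_sub h₁ h₂
  have max_eq_zero : max |u₁ x - u₂ x| |v₁ x - v₂ x| = 0 := by
    rcases le_total |v₁ x - v₂ x| |u₁ x - u₂ x| with hle | hle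
    · rw [max_eq_left hle] at hx ⊢
      rw [h₁.eq_at_max_abs_sub h₂ hlam (hu₁ x) (hv₁ x) (hu₂ x) (hv₂ x) hle
        fun y => (le_max_left _ _).trans (hx y), sub_self, abs_zero]
    · rw [max_eq_right hle] at hx ⊢
      rw [h₁.swap.eq_at_max_abs_sub h₂.swap hlam (hv₁ x) (hu₁ x) (hv₂ x) (hu₂ x) hle
        fun y => (le_max_right _ _).trans (hx y), sub_self, abs_zero]
  rw [max_eq_zero] at hx
  exact ⟨funext fun y => sub_eq_zero.1 (abs_nonpos_iff.1 ((le_max_left _ _).trans (hx y))),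
    funext fun y => sub_eq_zero.1 (abs_nonpos_iff.1 ((le_max_right _ _).trans (hx y)))⟩

end IsTopSol

theorem uniqueness_topological_solution_general (M : ℝ) :
    ∃ (N : ℕ) (Λ : ℝ), ∀ n : ℕ, 0 < n → ∀ (g h : Lat n → ℝ) (lam : ℝ), 0 < lam →
      (N ≤ n ∨ Λ ≤ lam) → IsSource M g → IsSource M h →
      ∀ u₁ v₁ u₂ v₂ : Lat n → ℝ,
        IsTopSol lam g h u₁ v₁ → IsTopSol lam g h u₂ v₂ → u₁ = u₂ ∧ v₁ = v₂ := by
  set N : ℕ := max 8 ⌈4 * M⌉₊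
  have hN : 8 ≤ N := le_max_left _ _
  have hMN : 4 * M ≤ N := (Nat.le_ceil _).trans (Nat.cast_le.2 (le_max_right _ _))
  refine ⟨N, 6 * M * exp (M + N) + 1, ?_⟩
  intro n hn g h lam hlam hlarge hg hh u₁ v₁ u₂ v₂ h₁ h₂
  replace hlarge : N ≤ n ∨ 6 * M * exp (M + N) < lam := hlarge.imp_right fun hle => by linarith
  exact h₁.eq_of_mem_Icc h₂ hlam
    (h₁.mem_Icc_of_large hlam hg hh hn hN hMN hlarge)
    (h₁.swap.mem_Icc_of_large hlam hh hg hn hN hMN hlarge)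
    (h₂.mem_Icc_of_large hlam hg hh hn hN hMN hlarge)
    (h₂.swap.mem_Icc_of_large hlam hh hg hn hN hMN hlarge)

/-- uniqueness of the topological solution whenever the dimension
n or the parameter λ is large enough, with thresholds N(g,h), λ(g,h) depending
only on the data (mⱼ), (nⱼ) of g and h. -/
theorem uniqueness_topological_solution
    {k₁ k₂ : ℕ} (m : Fin k₁ → ℕ) (nn : Fin k₂ → ℕ) :
    ∃ (N : ℕ) (Λ : ℝ), ∀ n : ℕ, 2 ≤ n →
      ∀ (p : Fin k₁ → Lat n) (q : Fin k₂ → Lat n) (lam : ℝ), 0 < lam →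
        (N ≤ n ∨ Λ ≤ lam) →
        ∀ u₁ v₁ u₂ v₂ : Lat n → ℝ,
          IsTopSol lam (fun x => 4 * Real.pi * ∑ j, (m j : ℝ) * dirac (p j) x)
            (fun x => 4 * Real.pi * ∑ j, (nn j : ℝ) * dirac (q j) x) u₁ v₁ →
          IsTopSol lam (fun x => 4 * Real.pi * ∑ j, (m j : ℝ) * dirac (p j) x)
            (fun x => 4 * Real.pi * ∑ j, (nn j : ℝ) * dirac (q j) x) u₂ v₂ →
          u₁ = u₂ ∧ v₁ = v₂ := by
  obtain ⟨N, Λ, unique⟩ := uniqueness_topological_solution_general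
    (max (4 * π * ∑ j, (m j : ℝ)) (4 * π * ∑ j, (nn j : ℝ)))
  exact ⟨N, Λ, fun n hn p q lam hlam hlarge => unique n (by omega) _ _ lam hlam hlarge
    ((isSource_sum_dirac m p).mono (le_max_left _ _))
    ((isSource_sum_dirac nn q).mono (le_max_right _ _))⟩

end CS
end
end

section
/- Let n ≥ 3. Then there exists a unique function u : ℤⁿ → ℝ satisfying Δu = δ₀ on ℤⁿ and u(x) → 0 as d(x) → +∞; moreover this function G_n is given by G_n(x) = −(2π)^{−n} ∫_{[−π,π]ⁿ} e^{i z·x} / (2n − 2∑_{j=1}^n cos z_j) dz for x ∈ ℤⁿ, z = (z₁,…,z_n) ∈ ℝⁿ. -/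
/-!
On the Fourier side `-Δ` is multiplication by the symbol `2n - 2 ∑ cos zⱼ`, and `δ₀` is the inverse
Fourier transform of the constant `1`. On the torus `[-π, π]ⁿ` the symbol is at least
`(4/π²) ‖z‖²`, so for `n ≥ 3` its inverse is integrable and the inverse Fourier transform of
`-1 / symbol` solves `ΔG = δ₀`; it vanishes at infinity by the Riemann–Lebesgue lemma.

The maximum principle forces a harmonic function on `ℤⁿ` vanishing at infinity to be zero. Applied
to complex-valued functions this gives uniqueness, and it identifies every real solution with the
Fourier formula, so that the formula is real-valued without any computation.
-/

open Filter Real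

noncomputable section

namespace CS

open MeasureTheory

section Laplacian

variable {n : ℕ} {E F : Type*} [AddCommGroup E] [AddCommGroup F]

/-- The graph Laplacian on `ℤⁿ` for functions with values in an arbitrary abelian group; `lapl` is
the real-valued case. It is needed because the Fourier formula is complex-valued. -/
def latticeLaplacian (u : Lat n → E) (x : Lat n) : E :=
  ∑ i, (u (x + unitVec i) + u (x - unitVec i) - 2 • u x)

lemma latticeLaplacian_eq_lapl (u : Lat n → ℝ) : latticeLaplacian u = lapl u := by
  ext x
  simp only [latticeLaplacian, lapl, nsmul_eq_mul, Nat.cast_ofNat]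

lemma map_latticeLaplacian (φ : E →+ F) (u : Lat n → E) (x : Lat n) :
    φ (latticeLaplacian u x) = latticeLaplacian (fun y => φ (u y)) x := by
  simp only [latticeLaplacian, map_sum, map_sub, map_add, map_nsmul]

lemma latticeLaplacian_sub (u v : Lat n → E) (x : Lat n) :
    latticeLaplacian (fun y => u y - v y) x = latticeLaplacian u x - latticeLaplacian v x := by
  simp only [latticeLaplacian, ← Finset.sum_sub_distrib]
  exact Finset.sum_congr rfl fun i _ => by abel

lemma latticeLaplacian_integral {α V : Type*} [MeasurableSpace α] {μ : Measure α}
    [NormedAddCommGroup V] [NormedSpace ℝ V] {f : Lat n → α → V}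
    (hf : ∀ x, Integrable (f x) μ) (x : Lat n) :
    latticeLaplacian (fun y => ∫ a, f y a ∂μ) x =
      ∫ a, latticeLaplacian (fun y => f y a) x ∂μ := by
  have hsum : ∀ i, Integrable (fun a => f (x + unitVec i) a + f (x - unitVec i) a) μ :=
    fun i => (hf _).add (hf _)
  have htwo : Integrable (fun a => f x a + f x a) μ := (hf x).add (hf x)
  have hterm : ∀ i, Integrable
      (fun a => f (x + unitVec i) a + f (x - unitVec i) a - (f x a + f x a)) μ :=
    fun i => (hsum i).sub htwo
  simp only [latticeLaplacian, two_nsmul]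
  rw [integral_finsetSum _ fun i _ => hterm i]
  refine Finset.sum_congr rfl fun i _ => ?_
  rw [integral_sub (hsum i) htwo, integral_add (hf _) (hf _), integral_add (hf _) (hf _)]

end Laplacian

section MaximumPrinciple

variable {n : ℕ}

lemma atInfty_eq_cofinite (n : ℕ) : atInfty n = cofinite := by
  refine le_antisymm (le_cofinite_iff_eventually_ne.2 fun a => ?_) (tendsto_iff_comap.1 ?_)
  · have hfar : ∀ᶠ x in atInfty n, latDist a < latDist x :=
      tendsto_comap.eventually (eventually_gt_atTop _)
    exact hfar.mono fun x hx hxa => hx.ne' (congrArg latDist hxa)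
  · refine tendsto_atTop.2 fun R => ?_
    refine (Set.finite_Icc (fun _ => -(R : ℤ)) (fun _ => (R : ℤ))).subset fun x hx => ?_
    have hcoord : ∀ i, (x i).natAbs ≤ R := fun i =>
      (Finset.single_le_sum (f := fun j => (x j).natAbs) (fun _ _ => Nat.zero_le _)
        (Finset.mem_univ i)).trans (Nat.lt_of_not_le hx).le
    exact Set.mem_Icc.2 ⟨fun i => by grind, fun i => by grind⟩

lemma tendsto_add_nsmul_unitVec_atInfty (x : Lat n) (i : Fin n) :
    Tendsto (fun k : ℕ => x + k • unitVec i) atTop (atInfty n) := by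
  rw [atInfty_eq_cofinite, ← Nat.cofinite_eq_atTop]
  refine Function.Injective.tendsto_cofinite fun k l hkl => ?_
  simpa [unitVec] using congrFun hkl i

lemma exists_forall_le_of_tendsto_zero {u : Lat n → ℝ} (h0 : Tendsto u (atInfty n) (nhds 0))
    {a : Lat n} (ha : 0 < u a) : ∃ m, ∀ x, u x ≤ u m := by
  refine continuous_of_discreteTopology.exists_forall_ge' a ?_
  rw [cocompact_eq_cofinite, ← atInfty_eq_cofinite]
  exact h0.eventually_le_const ha

lemma eq_max_of_lapl_nonneg {u : Lat n → ℝ} {m : Lat n} (hm : 0 ≤ lapl u m)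
    (hmax : ∀ x, u x ≤ u m) (i : Fin n) : u (m + unitVec i) = u m := by
  have hterm : ∀ j ∈ Finset.univ, u (m + unitVec j) + u (m - unitVec j) - 2 * u m ≤ 0 :=
    fun j _ => by linarith [hmax (m + unitVec j), hmax (m - unitVec j)]
  have hi := (Finset.sum_eq_zero_iff_of_nonpos hterm).1
    (le_antisymm (Finset.sum_nonpos hterm) hm) i (Finset.mem_univ i)
  linarith [hmax (m + unitVec i), hmax (m - unitVec i)]

/-- A positive maximum would propagate along a coordinate ray all the way to infinity. -/
theorem nonpos_of_lapl_nonneg [NeZero n] {u : Lat n → ℝ} (hu : ∀ x, 0 ≤ lapl u x)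
    (h0 : Tendsto u (atInfty n) (nhds 0)) (a : Lat n) : u a ≤ 0 := by
  by_contra! ha
  obtain ⟨m, hmax⟩ := exists_forall_le_of_tendsto_zero h0 ha
  have hray : ∀ k : ℕ, u (m + k • unitVec 0) = u m := by
    intro k
    induction k with
    | zero => simp
    | succ k ih =>
      rw [succ_nsmul, ← add_assoc, eq_max_of_lapl_nonneg (hu _) (fun x => ih ▸ hmax x), ih]
  have hm : u m = 0 := tendsto_nhds_unique (tendsto_const_nhds.congr fun k => (hray k).symm)
    (h0.comp (tendsto_add_nsmul_unitVec_atInfty m 0))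
  exact (ha.trans_le (hmax a)).ne' hm

lemma eq_zero_of_lapl_eq_zero [NeZero n] {u : Lat n → ℝ} (hu : ∀ x, lapl u x = 0)
    (h0 : Tendsto u (atInfty n) (nhds 0)) (a : Lat n) : u a = 0 := by
  refine le_antisymm (nonpos_of_lapl_nonneg (fun x => (hu x).ge) h0 a) ?_
  have hneg : ∀ x, lapl (fun y => -u y) x = 0 := fun x => by
    rw [← latticeLaplacian_eq_lapl]
    have h := map_latticeLaplacian (negAddMonoidHom : ℝ →+ ℝ) u x
    simpa [latticeLaplacian_eq_lapl, hu] using h.symm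
  simpa using nonpos_of_lapl_nonneg (fun x => (hneg x).ge) (by simpa using h0.neg) a

/-- Composing the difference with a continuous linear functional reduces to the real case. -/
theorem eq_of_latticeLaplacian_eq [NeZero n] {E : Type*} [NormedAddCommGroup E] [NormedSpace ℝ E]
    {u v : Lat n → E} (huv : ∀ x, latticeLaplacian u x = latticeLaplacian v x)
    (hu : Tendsto u (atInfty n) (nhds 0)) (hv : Tendsto v (atInfty n) (nhds 0)) : u = v := by
  funext a
  refine sub_eq_zero.1 (SeparatingDual.eq_zero_of_forall_dual_eq_zero (R := ℝ) fun φ => ?_)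
  refine eq_zero_of_lapl_eq_zero (u := fun x => φ (u x - v x)) (fun x => ?_) ?_ a
  · have h := map_latticeLaplacian (φ : E →+ ℝ) (fun y => u y - v y) x
    rw [latticeLaplacian_sub, huv, sub_self, map_zero, latticeLaplacian_eq_lapl] at h
    exact h.symm
  · simpa [Function.comp_def] using (φ.continuous.tendsto _).comp (hu.sub hv)

end MaximumPrinciple

section Characters

variable {n : ℕ}

/-- The character `e^{i z·x}` of `ℤⁿ` with frequency `z`. -/
def latticeChar (x : Lat n) (z : Fin n → ℝ) : ℂ :=
  Complex.exp (Complex.I * ((∑ j, z j * (x j : ℝ) : ℝ) : ℂ))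

/-- The Fourier symbol `2n - 2 ∑ cos zⱼ` of `-Δ` on `ℤⁿ`. -/
def symbol (z : Fin n → ℝ) : ℝ := 2 * (n : ℝ) - 2 * ∑ j, Real.cos (z j)

@[fun_prop]
lemma continuous_latticeChar (x : Lat n) : Continuous (latticeChar x) := by
  unfold latticeChar
  fun_prop

@[fun_prop]
lemma continuous_symbol : Continuous (symbol : (Fin n → ℝ) → ℝ) := by
  unfold symbol
  fun_prop

lemma norm_latticeChar (x : Lat n) (z : Fin n → ℝ) : ‖latticeChar x z‖ = 1 := by
  rw [latticeChar, Complex.norm_exp_I_mul_ofReal]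

lemma latticeChar_eq_prod (x : Lat n) (z : Fin n → ℝ) :
    latticeChar x z = ∏ j, Complex.exp (x j * Complex.I * z j) := by
  rw [latticeChar, ← Complex.exp_sum]
  push_cast
  rw [Finset.mul_sum]
  exact congrArg _ (Finset.sum_congr rfl fun j _ => by ring)

lemma latticeChar_add (x y : Lat n) (z : Fin n → ℝ) :
    latticeChar (x + y) z = latticeChar x z * latticeChar y z := by
  simp only [latticeChar, Pi.add_apply, Int.cast_add, mul_add, Finset.sum_add_distrib,
    Complex.ofReal_add, Complex.exp_add]

lemma latticeChar_unitVec_add_neg (i : Fin n) (z : Fin n → ℝ) :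
    latticeChar (unitVec i) z + latticeChar (-unitVec i) z = 2 * Real.cos (z i) := by
  rw [Complex.ofReal_cos, Complex.two_cos]
  simp [latticeChar, unitVec, mul_comm]

lemma latticeLaplacian_latticeChar (x : Lat n) (z : Fin n → ℝ) :
    latticeLaplacian (fun y => latticeChar y z) x = -symbol z * latticeChar x z := by
  have hterm : ∀ i, latticeChar (x + unitVec i) z + latticeChar (x - unitVec i) z -
      2 • latticeChar x z = (2 * Real.cos (z i) - 2) * latticeChar x z := fun i => by
    rw [← latticeChar_unitVec_add_neg, sub_eq_add_neg x, latticeChar_add, latticeChar_add]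
    ring
  simp only [latticeLaplacian, hterm]
  rw [← Finset.sum_mul, Finset.sum_sub_distrib, ← Finset.mul_sum, symbol]
  simp [mul_comm]

end Characters

section Fourier

variable {n : ℕ}

/-- The frequency torus, represented by the fundamental domain `[-π, π]ⁿ`. -/
def torusBox (n : ℕ) : Set (Fin n → ℝ) := Set.Icc (fun _ => -π) (fun _ => π)

lemma measurableSet_torusBox : MeasurableSet (torusBox n) := measurableSet_Icc

/-- The function on `ℤⁿ` with Fourier transform `f`, that is,
`x ↦ (2π)⁻ⁿ ∫_{[-π,π]ⁿ} e^{i z·x} f(z) dz`. -/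
def inverseFourier (f : (Fin n → ℝ) → ℂ) (x : Lat n) : ℂ :=
  (((2 * π) ^ n : ℝ) : ℂ)⁻¹ * ∫ z in torusBox n, latticeChar x z * f z

lemma inverseFourier_congr_ae {f g : (Fin n → ℝ) → ℂ}
    (hfg : f =ᵐ[volume.restrict (torusBox n)] g) : inverseFourier f = inverseFourier g := by
  funext x
  rw [inverseFourier, inverseFourier]
  exact congrArg _ (integral_congr_ae (hfg.mono fun z hz => congrArg _ hz))

lemma latticeLaplacian_inverseFourier {f : (Fin n → ℝ) → ℂ} (hf : IntegrableOn f (torusBox n))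
    (x : Lat n) :
    latticeLaplacian (inverseFourier f) x = inverseFourier (fun z => -symbol z * f z) x := by
  have hint : ∀ y : Lat n, IntegrableOn (fun z => latticeChar y z * f z) (torusBox n) := fun y =>
    hf.bdd_mul (continuous_latticeChar y).aestronglyMeasurable
      (ae_of_all _ fun z => (norm_latticeChar y z).le)
  have hpull : ∀ z, latticeLaplacian (fun y => latticeChar y z * f z) x =
      latticeChar x z * (-symbol z * f z) := fun z => by
    have h := map_latticeLaplacian (AddMonoidHom.mulRight (f z)) (fun y => latticeChar y z) x
    simp only [AddMonoidHom.mulRight_apply, latticeLaplacian_latticeChar] at h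
    rw [← h]
    ring
  have hconst := map_latticeLaplacian (AddMonoidHom.mulLeft (((2 * π) ^ n : ℝ) : ℂ)⁻¹)
    (fun y => ∫ z in torusBox n, latticeChar y z * f z) x
  simp only [AddMonoidHom.coe_mulLeft, latticeLaplacian_integral hint, hpull] at hconst
  exact hconst.symm

lemma integral_exp_int_mul_I (k : ℤ) :
    ∫ t in Set.Icc (-π) π, Complex.exp (k * Complex.I * t) =
      if k = 0 then 2 * (π : ℂ) else 0 := by
  rw [integral_Icc_eq_integral_Ioc, ← intervalIntegral.integral_of_le (by linarith [Real.pi_pos])]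
  split_ifs with hk
  · simp [hk, two_mul]
  · rw [integral_exp_mul_complex (by simp [hk]), div_eq_zero_iff, sub_eq_zero]
    exact .inl (Complex.exp_eq_exp_iff_exists_int.2 ⟨k, by push_cast; ring⟩)

lemma integral_latticeChar (x : Lat n) :
    ∫ z in torusBox n, latticeChar x z = if x = 0 then (2 * (π : ℂ)) ^ n else 0 := by
  simp only [latticeChar_eq_prod]
  rw [torusBox, ← Set.pi_univ_Icc, volume_pi, Measure.restrict_pi_pi,
    integral_fintype_prod_eq_prod (f := fun j (t : ℝ) => Complex.exp (x j * Complex.I * t))]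
  simp only [integral_exp_int_mul_I]
  split_ifs with hx
  · simp [hx]
  · obtain ⟨j, hj⟩ := Function.ne_iff.1 hx
    exact Finset.prod_eq_zero (Finset.mem_univ j) (if_neg hj)

lemma inverseFourier_one (x : Lat n) : inverseFourier (fun _ => 1) x = dirac 0 x := by
  have hpi : (π : ℂ) ≠ 0 := Complex.ofReal_ne_zero.2 Real.pi_ne_zero
  simp only [inverseFourier, mul_one, integral_latticeChar, dirac]
  split_ifs <;> simp [hpi]

/-- Sends `x` to the functional `w : z ↦ -(z·x)/(2π)`, normalised so that `e^{i z·x}` is the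
character `e^{-2πi w(z)}` appearing in Mathlib's Riemann–Lebesgue lemma. -/
def frequencyFunctional (n : ℕ) : (Fin n → ℝ) ≃ₗ[ℝ] StrongDual ℝ (Fin n → ℝ) :=
  (LinearEquiv.smulOfNeZero ℝ (Fin n → ℝ) (-(2 * π)⁻¹) (by simp [Real.pi_ne_zero])).trans
    ((dotProductEquiv ℝ (Fin n)).trans LinearMap.toContinuousLinearMap)

lemma latticeChar_eq_fourierChar (x : Lat n) (z : Fin n → ℝ) :
    latticeChar x z = Real.fourierChar (-frequencyFunctional n (fun j => (x j : ℝ)) z) := by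
  have hpi : π ≠ 0 := Real.pi_ne_zero
  have h : frequencyFunctional n (fun j => (x j : ℝ)) z =
      -(2 * π)⁻¹ * ∑ j, z j * (x j : ℝ) := by
    simp [frequencyFunctional, dotProduct, Finset.mul_sum, mul_comm]
  rw [latticeChar, h, Real.fourierChar_apply, mul_comm Complex.I]
  congr 3
  field_simp

lemma tendsto_intCast_cocompact (n : ℕ) :
    Tendsto (fun (x : Lat n) j => (x j : ℝ)) (atInfty n) (cocompact (Fin n → ℝ)) := by
  rw [atInfty_eq_cofinite, ← cocompact_eq_cofinite]
  exact (Topology.IsClosedEmbedding.piMap fun _ : Fin n =>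
    Int.isClosedEmbedding_coe_real).tendsto_cocompact

theorem tendsto_inverseFourier (f : (Fin n → ℝ) → ℂ) :
    Tendsto (inverseFourier f) (atInfty n) (nhds 0) := by
  have hfreq : Tendsto (frequencyFunctional n) (cocompact _) (cocompact _) :=
    ((frequencyFunctional n).toLinearMap.isClosedEmbedding_of_injective
      (frequencyFunctional n).ker).tendsto_cocompact
  have hRL := ((tendsto_integral_exp_smul_cocompact ((torusBox n).indicator f) volume).comp
    (hfreq.comp (tendsto_intCast_cocompact n))).const_mul (((2 * π) ^ n : ℝ) : ℂ)⁻¹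
  rw [mul_zero] at hRL
  refine hRL.congr fun x => ?_
  rw [inverseFourier, ← integral_indicator measurableSet_torusBox]
  simp only [Function.comp_apply, Set.indicator_mul_right, Circle.smul_def, smul_eq_mul,
    latticeChar_eq_fourierChar]

end Fourier

section GreenFunction

variable {n : ℕ}

lemma mul_norm_sq_le_symbol {z : Fin n → ℝ} (hz : z ∈ torusBox n) :
    4 / π ^ 2 * ‖z‖ ^ 2 ≤ symbol z := by
  have hnorm : ‖z‖ ≤ √(∑ j, z j ^ 2) :=
    (pi_norm_le_iff_of_nonneg (Real.sqrt_nonneg _)).2 fun j => Real.abs_le_sqrt <|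
      Finset.single_le_sum (f := fun i => z i ^ 2) (fun _ _ => sq_nonneg _) (Finset.mem_univ j)
  have hcos : ∀ j, 2 / π ^ 2 * z j ^ 2 ≤ 1 - Real.cos (z j) := fun j => by
    linarith [Real.cos_le_one_sub_mul_cos_sq (abs_le.2 ⟨hz.1 j, hz.2 j⟩)]
  calc 4 / π ^ 2 * ‖z‖ ^ 2 ≤ 4 / π ^ 2 * ∑ j, z j ^ 2 := by
        gcongr
        exact (Real.le_sqrt (norm_nonneg z) (by positivity)).1 hnorm
    _ = 2 * ∑ j, 2 / π ^ 2 * z j ^ 2 := by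
        rw [← Finset.mul_sum]
        ring
    _ ≤ 2 * ∑ j, (1 - Real.cos (z j)) := by
        gcongr with j
        exact hcos j
    _ = symbol z := by
        rw [symbol, Finset.sum_sub_distrib]
        simp [mul_sub]

lemma symbol_pos {z : Fin n → ℝ} (hz : z ∈ torusBox n) (hz0 : z ≠ 0) : 0 < symbol z :=
  (by positivity : 0 < 4 / π ^ 2 * ‖z‖ ^ 2).trans_le (mul_norm_sq_le_symbol hz)

lemma ae_symbol_pos [NeZero n] : ∀ᵐ z ∂(volume.restrict (torusBox n)), 0 < symbol z := by
  filter_upwards [ae_restrict_mem measurableSet_torusBox,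
    ae_restrict_of_ae (compl_mem_ae_iff.2 (measure_singleton 0))] with z hz hz0
  exact symbol_pos hz hz0

lemma torusBox_ae_eq_ball : torusBox n =ᵐ[volume] Metric.ball (0 : Fin n → ℝ) π := by
  rw [ball_pi _ Real.pi_pos]
  simp only [Pi.zero_apply, Real.ball_eq_Ioo, zero_sub, zero_add]
  exact Measure.univ_pi_Ioo_ae_eq_Icc.symm

/-- `1 / symbol` has a singularity of order `‖z‖⁻²` at the origin, which is integrable in dimension
greater than `2`. -/
lemma integrableOn_inv_symbol (hn : 3 ≤ n) :
    IntegrableOn (fun z : Fin n → ℝ => (symbol z)⁻¹) (torusBox n) := by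
  have hmeas : Measurable fun z : Fin n → ℝ => (symbol z)⁻¹ := by fun_prop
  have hbound : ∀ z ∈ torusBox n, ‖(symbol z)⁻¹‖ ≤ π ^ 2 / 4 * ‖z‖ ^ (-2 : ℝ) := by
    intro z hz
    rcases eq_or_ne z 0 with rfl | hz0
    · simp [symbol]
    · rw [norm_inv, Real.norm_of_nonneg (symbol_pos hz hz0).le, Real.rpow_neg (norm_nonneg z),
        Real.rpow_two, ← inv_div, ← mul_inv]
      exact inv_anti₀ (by positivity) (mul_norm_sq_le_symbol hz)
  rw [integrableOn_congr_set_ae torusBox_ae_eq_ball]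
  refine integrableOn_ball_of_norm_le_rpow (C := π ^ 2 / 4) (α := 2) ?_ ?_ ?_
    hmeas.aestronglyMeasurable
  · rw [Module.finrank_fin_fun]
    omega
  · rw [Module.finrank_fin_fun]
    exact_mod_cast hn
  · rw [← Measure.restrict_congr_set torusBox_ae_eq_ball]
    exact ae_restrict_of_forall_mem measurableSet_torusBox hbound

/-- The lattice Green's function `Gₙ`, whose Fourier transform is `-1 / symbol`. It is kept
complex-valued, as given by the Fourier formula. The value `0` that the transform takes at the zero
`z = 0` of the symbol is immaterial. -/
def greenFunction (n : ℕ) : Lat n → ℂ := inverseFourier fun z => -(symbol z : ℂ)⁻¹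

lemma greenFunction_apply (x : Lat n) :
    greenFunction n x = -((((2 * π) ^ n : ℝ) : ℂ))⁻¹ *
      ∫ z : Fin n → ℝ in Set.Icc (fun _ => -π) (fun _ => π),
        Complex.exp (Complex.I * ((∑ j, z j * (x j : ℝ) : ℝ) : ℂ)) /
          (2 * (n : ℂ) - 2 * ((∑ j, Real.cos (z j) : ℝ) : ℂ)) := by
  simp only [greenFunction, inverseFourier, latticeChar, symbol, torusBox, mul_neg, integral_neg,
    neg_mul, div_eq_mul_inv]
  push_cast
  rfl

lemma latticeLaplacian_greenFunction (hn : 3 ≤ n) (x : Lat n) :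
    latticeLaplacian (greenFunction n) x = dirac 0 x := by
  have : NeZero n := ⟨by omega⟩
  have hint : IntegrableOn (fun z : Fin n → ℝ => -(symbol z : ℂ)⁻¹) (torusBox n) := by
    simpa [IntegrableOn] using (integrableOn_inv_symbol hn).ofReal (𝕜 := ℂ)
  rw [greenFunction, latticeLaplacian_inverseFourier hint, ← inverseFourier_one]
  refine congrFun (inverseFourier_congr_ae ?_) x
  filter_upwards [ae_symbol_pos] with z hz
  rw [neg_mul_neg, mul_inv_cancel₀ (Complex.ofReal_ne_zero.2 hz.ne')]

lemma tendsto_greenFunction : Tendsto (greenFunction n) (atInfty n) (nhds 0) :=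
  tendsto_inverseFourier _

lemma lapl_re_greenFunction (hn : 3 ≤ n) (x : Lat n) :
    lapl (fun y => (greenFunction n y).re) x = dirac 0 x := by
  have h := map_latticeLaplacian Complex.reAddGroupHom (greenFunction n) x
  simpa [latticeLaplacian_greenFunction hn, latticeLaplacian_eq_lapl] using h.symm

lemma ofReal_eq_greenFunction (hn : 3 ≤ n) {G : Lat n → ℝ} (hG : ∀ x, lapl G x = dirac 0 x)
    (hG0 : Tendsto G (atInfty n) (nhds 0)) (x : Lat n) : (G x : ℂ) = greenFunction n x := by
  have : NeZero n := ⟨by omega⟩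
  refine congrFun (eq_of_latticeLaplacian_eq (u := fun y => (G y : ℂ)) (fun y => ?_) ?_
    tendsto_greenFunction) x
  · have h := map_latticeLaplacian Complex.ofRealHom.toAddMonoidHom G y
    rw [latticeLaplacian_greenFunction hn, ← hG, ← latticeLaplacian_eq_lapl]
    exact h.symm
  · exact_mod_cast (Complex.continuous_ofReal.tendsto 0).comp hG0

end GreenFunction

/-- for n ≥ 3 there is a unique function on ℤⁿ with Δu = δ₀ and
u → 0 at infinity (the Green's function Gₙ), and it is given by
Gₙ(x) = −(2π)⁻ⁿ ∫_{[−π,π]ⁿ} e^{iz·x} / (2n − 2∑ⱼ cos zⱼ) dz. -/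
theorem green_function_existence_uniqueness_formula
    {n : ℕ} (hn : 3 ≤ n) :
    (∃! G : Lat n → ℝ,
      (∀ x, lapl G x = dirac 0 x) ∧ Filter.Tendsto G (atInfty n) (nhds 0)) ∧
    (∀ G : Lat n → ℝ,
      ((∀ x, lapl G x = dirac 0 x) ∧ Filter.Tendsto G (atInfty n) (nhds 0)) →
      ∀ x : Lat n, (G x : ℂ)
        = -((((2 * Real.pi) ^ n : ℝ) : ℂ))⁻¹ *
            ∫ z : Fin n → ℝ in Set.Icc (fun _ => -Real.pi) (fun _ => Real.pi),
              Complex.exp (Complex.I * ((∑ j, z j * (x j : ℝ) : ℝ) : ℂ)) /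
                (2 * (n : ℂ) - 2 * ((∑ j, Real.cos (z j) : ℝ) : ℂ))) := by
  have hformula : ∀ G : Lat n → ℝ,
      ((∀ x, lapl G x = dirac 0 x) ∧ Tendsto G (atInfty n) (nhds 0)) →
      ∀ x, (G x : ℂ) = greenFunction n x :=
    fun _ hG => ofReal_eq_greenFunction hn hG.1 hG.2
  refine ⟨⟨fun x => (greenFunction n x).re, ⟨lapl_re_greenFunction hn, ?_⟩, fun G hG => ?_⟩,
    fun G hG x => (hformula G hG x).trans (greenFunction_apply x)⟩
  · exact (Complex.continuous_re.tendsto 0).comp tendsto_greenFunction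
  · exact funext fun x => congrArg Complex.re (hformula G hG x)

end CS
end
end
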